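/- Let n ≥ 3. There is no n×n complex matrix A such that U·A·Uᵀ is a monomial matrix for every unitary U ∈ U(n). -/

import Mathlib

/-!
Suppose `U A Uᵀ` is monomial for every unitary `U`; taking `U = 1`, `A` itself is monomial. Every
contradiction comes from a unitary that acts only in a coordinate plane `⟨e_p, e_q⟩`, namely
`planeRot p q z` with block `!![3/5, z; -z̄, 3/5]` and `|z| = 4/5`.

* If `A` has an off-diagonal nonzero entry `A i j`, choose `k ∉ {i, j}` (possible as `n ≥ 3`) and
  rotate in the plane of `j, k`. Row `i` of `U` is `e_i`, and row `i` of `A` is supported at `j`, so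
  the `(i, l)` entry of `U A Uᵀ` is `A i j * U l j`, which is nonzero for both `l = j` and `l = k`.
* Otherwise `A` is diagonal with nonzero diagonal entries. Let `a, d` be two of them. Rotating in
  their plane yields the entries `9/25 * a + z² * d` at `(p, p)` and `3/5 * (z * d - z̄ * a)` at
  `(p, q)`, of which one must vanish. The choices `z = 4/5` and `z = 4i/5` are incompatible.
-/

open scoped Matrix Kronecker

/-- A square complex matrix is monomial if it has exactly one nonzero entry in each row and
exactly one nonzero entry in each column. -/
def IsMonomial {m : Type*} [Fintype m] (M : Matrix m m ℂ) : Prop :=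
  (∀ i, ∃! j, M i j ≠ 0) ∧ (∀ j, ∃! i, M i j ≠ 0)

/-- The matrix acting on the coordinates `p, q` through the block `!![3/5, z; -z̄, 3/5]` and as the
identity on the others (for `p ≠ q`). Each row `r` is written as a combination of the
coordinate vectors at `r` and at `Equiv.swap p q r`. -/
noncomputable def planeRot {n : ℕ} (p q : Fin n) (z : ℂ) : Matrix (Fin n) (Fin n) ℂ :=
  fun r s => (if r = p ∨ r = q then 3 / 5 else 1) * (if s = r then 1 else 0) +
    (if r = p then z else if r = q then -star z else 0) * (if s = Equiv.swap p q r then 1 else 0)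

lemma sum_planeRot_mul {n : ℕ} (p q : Fin n) (z : ℂ) (r : Fin n) (f : Fin n → ℂ) :
    ∑ s, planeRot p q z r s * f s = (if r = p ∨ r = q then 3 / 5 else 1) * f r +
      (if r = p then z else if r = q then -star z else 0) * f (Equiv.swap p q r) := by
  simp only [planeRot, add_mul, Finset.sum_add_distrib, mul_assoc, ← Finset.mul_sum]
  simp

lemma planeRot_mem_unitaryGroup {n : ℕ} {p q : Fin n} (hpq : p ≠ q) {z : ℂ}
    (hz : z * star z = 16 / 25) : planeRot p q z ∈ Matrix.unitaryGroup (Fin n) ℂ := by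
  have hz' : star z * z = 16 / 25 := by rw [mul_comm, hz]
  rw [Matrix.mem_unitaryGroup_iff]
  ext r s
  simp only [Matrix.mul_apply, Matrix.star_apply]
  rw [sum_planeRot_mul]
  have hqp := hpq.symm
  have h35 : star (3 / 5 : ℂ) = 3 / 5 := by simp
  by_cases hrp : r = p
  · subst hrp
    by_cases hsr : s = r
    · subst hsr
      simp [planeRot, hpq, hqp] at hz ⊢
      rw [hz]; norm_num
    · by_cases hsq : s = q
      · subst hsq
        simp [planeRot, hpq, hqp]; ring
      · simp [planeRot, hpq, Ne.symm hsr, hsr, hsq, Ne.symm hsq, Equiv.swap_apply_of_ne_of_ne]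
  · by_cases hrq : r = q
    · subst hrq
      by_cases hsr : s = r
      · subst hsr
        simp [planeRot, hpq, hqp] at hz' ⊢
        rw [hz']; norm_num
      · by_cases hsp : s = p
        · subst hsp
          simp [planeRot, hpq, hqp]; ring
        · simp [planeRot, hqp, Ne.symm hsr, hsr, hsp, Ne.symm hsp, Equiv.swap_apply_of_ne_of_ne]
    · by_cases hsp : s = p
      · subst hsp
        simp [planeRot, hrp, hrq]
      · by_cases hsq : s = q
        · subst hsq
          simp [planeRot, hrp, hrq]
        · simp [planeRot, hrp, hrq, hsp, hsq, Matrix.one_apply]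

/-- For `U = planeRot p q z` and `D` diagonal, `U D Uᵀ` has only two candidate nonzero entries in row
`p`; monomiality forces one of them to vanish. -/
lemma planeRot_diagonal_constraint {n : ℕ} {p q : Fin n} (hpq : p ≠ q) (z : ℂ) (a : Fin n → ℂ)
    (h : IsMonomial (planeRot p q z * Matrix.diagonal a * (planeRot p q z)ᵀ)) :
    9 / 25 * a p + z ^ 2 * a q = 0 ∨ z * a q = star z * a p := by
  have entry : ∀ s, (planeRot p q z * Matrix.diagonal a * (planeRot p q z)ᵀ) p s =
      3 / 5 * (a p * planeRot p q z s p) + z * (a q * planeRot p q z s q) := by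
    intro s
    simp only [Matrix.mul_apply (N := (planeRot p q z)ᵀ), Matrix.mul_diagonal,
      Matrix.transpose_apply, mul_assoc]
    rw [sum_planeRot_mul]
    simp
  by_contra! hne
  refine hpq ((h.1 p).unique (y₁ := p) (y₂ := q) ?_ ?_)
  · rw [entry]
    convert hne.1 using 1
    simp [planeRot, hpq, hpq.symm]; ring
  · rw [entry]
    intro h0
    apply hne.2
    simp [planeRot, hpq, hpq.symm] at h0 ⊢
    linear_combination (5 / 3) * h0

/-- for `n ≥ 3` there is no `n × n` complex matrix `A` such that `U A Uᵀ` is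
monomial for every unitary `U ∈ U(n)`. -/
theorem stmt11 {n : ℕ} (hn : 3 ≤ n) :
    ¬ ∃ A : Matrix (Fin n) (Fin n) ℂ,
        ∀ U ∈ Matrix.unitaryGroup (Fin n) ℂ, IsMonomial (U * A * Uᵀ) := by
  rintro ⟨A, hA⟩
  have hA1 : IsMonomial A := by simpa using hA 1 (one_mem _)
  have hz1 : (4 / 5 : ℂ) * star (4 / 5 : ℂ) = 16 / 25 := by simp; norm_num
  have hz2 : (4 / 5 * Complex.I : ℂ) * star (4 / 5 * Complex.I : ℂ) = 16 / 25 := by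
    simp
    linear_combination (-16 / 25) * Complex.I_sq
  by_cases hoff : ∃ i j, i ≠ j ∧ A i j ≠ 0
  · obtain ⟨i, j, hij, hne⟩ := hoff
    obtain ⟨k, hk⟩ : ∃ k, k ∉ ({i, j} : Finset (Fin n)) := by
      by_contra! hall
      have h1 := Finset.card_le_card (fun x _ => hall x : Finset.univ ⊆ ({i, j} : Finset (Fin n)))
      have h2 := Finset.card_le_two (a := i) (b := j)
      simp only [Finset.card_univ, Fintype.card_fin] at h1
      omega
    simp only [Finset.mem_insert, Finset.mem_singleton, not_or] at hk
    obtain ⟨hki, hkj⟩ := hk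
    have hrow : ∀ m, m ≠ j → A i m = 0 := fun m hm => by
      by_contra h0
      exact hm ((hA1.1 i).unique h0 hne)
    have hM := hA _ (planeRot_mem_unitaryGroup (Ne.symm hkj) hz1)
    have entry : ∀ l, (planeRot j k (4 / 5) * A * (planeRot j k (4 / 5))ᵀ) i l =
        A i j * planeRot j k (4 / 5) l j := by
      intro l
      rw [Matrix.mul_assoc, Matrix.mul_apply, sum_planeRot_mul]
      simp only [hij, Ne.symm hki, or_self, if_false, one_mul, zero_mul, add_zero, Matrix.mul_apply,
        Matrix.transpose_apply]
      exact Finset.sum_eq_single j (fun m _ hm => by rw [hrow m hm, zero_mul]) (by simp)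
    refine hkj ((hM.1 i).unique (y₁ := k) (y₂ := j) ?_ ?_)
    · rw [entry]
      exact mul_ne_zero hne (by simp [planeRot, hkj, Ne.symm hkj])
    · rw [entry]
      exact mul_ne_zero hne (by simp [planeRot, Ne.symm hkj])
  · push Not at hoff
    obtain ⟨a, rfl⟩ : ∃ a, A = Matrix.diagonal a :=
      ⟨A.diag, (Matrix.IsDiag.diagonal_diag fun i j hij => hoff i j hij).symm⟩
    have ha : ∀ i, a i ≠ 0 := fun i h0 => by
      obtain ⟨j, hj, -⟩ := hA1.1 i
      by_cases hij : i = j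
      · subst hij
        simp [h0] at hj
      · exact hj (hoff i j hij)
    let p : Fin n := ⟨0, by omega⟩
    let q : Fin n := ⟨1, by omega⟩
    have hpq : p ≠ q := by simp [p, q]
    have e1 := planeRot_diagonal_constraint hpq _ a (hA _ (planeRot_mem_unitaryGroup hpq hz1))
    have e2 := planeRot_diagonal_constraint hpq _ a (hA _ (planeRot_mem_unitaryGroup hpq hz2))
    have e1' : 9 * a p + 16 * a q = 0 ∨ a q = a p := by
      refine e1.imp (fun h => ?_) (fun h => ?_)
      · linear_combination 25 * h
      · simp at h
        exact h
    have e2' : 9 * a p - 16 * a q = 0 ∨ a q = -a p := by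
      refine e2.imp (fun h => ?_) (fun h => ?_)
      · linear_combination 25 * h - 16 * a q * Complex.I_sq
      · simp at h
        have h' : Complex.I * (a q + a p) = 0 := by linear_combination (5 / 4) * h
        exact eq_neg_of_add_eq_zero_left ((mul_eq_zero.mp h').resolve_left Complex.I_ne_zero)
    apply ha p
    rcases e1' with h | h <;> rcases e2' with h' | h'
    · linear_combination (1 / 18) * h + (1 / 18) * h'
    · linear_combination (-1 / 7) * h + (16 / 7) * h'
    · linear_combination (-1 / 7) * h' - (16 / 7) * h
    · linear_combination (-1 / 2) * h + (1 / 2) * h'
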